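/- arXiv:1603.09698 — 4 statements merged into one kernel-verified Lean document; each statement's English description precedes it below -/
import Mathlib

section
/- Let X be a topological space, A ⊆ X, and k ≥ 1. Then A is a union of k locally closed subsets of X if and only if A^(k) = ∅, where A^(0) := A and A^(j+1) := A^(j) \ lc(A^(j)), with lc(S) := S \ closure(closure(S) \ S) the locally closed part of S. -/
/-!
If `A^(k) = ∅`, then `A` is the union of the `k` sets `lc(A^(j))`, `j < k`, and each of them is
locally closed because `lc(S) = closure S \ closure (closure S \ S)`.

Conversely, let `A = ⋃ i, U i ∩ Z i` with `U i` open and `Z i` closed. For a point `x` let `I(x)`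
be the set of indices with `x ∈ U i`. Each `A^(j)` is relatively closed in `A`, so a point
`x ∈ A^(j+1)` is a limit of points `y ∈ closure A^(j)` outside `A`. Choosing such a `y` in all the
`U i` containing `x`, and then `z ∈ A^(j)` close enough to `y`, one finds `I(x) ⊂ I(z)` strictly
(`ssubset_of_mem_dmIter_succ`). Hence `x ∈ A^(j)` implies `|I(x)| + j ≤ k`; since `I(x)` is
nonempty for `x ∈ A`, the set `A^(k)` is empty.
-/

/-- The locally closed part of a set: `lc(S) := S \ closure(closure S \ S)`. -/
def lcPart {X : Type*} [TopologicalSpace X] (S : Set X) : Set X :=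
  S \ closure (closure S \ S)

/-- The Dougherty–Miller iterates: `A^(0) := A`, `A^(j+1) := A^(j) \ lc(A^(j))`. -/
def dmIter {X : Type*} [TopologicalSpace X] (A : Set X) : ℕ → Set X
  | 0 => A
  | j + 1 => dmIter A j \ lcPart (dmIter A j)

lemma isLocallyClosed_lcPart {X : Type*} [TopologicalSpace X] (S : Set X) :
    IsLocallyClosed (lcPart S) := by
  refine ⟨(closure (closure S \ S))ᶜ, closure S, isClosed_closure.isOpen_compl,
    isClosed_closure, ?_⟩
  ext x
  constructor
  · rintro ⟨h1, h2⟩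
    exact ⟨h2, subset_closure h1⟩
  · rintro ⟨h1, h2⟩
    exact ⟨by_contra fun h => h1 (subset_closure ⟨h2, h⟩), h1⟩

lemma dmIter_subset {X : Type*} [TopologicalSpace X] (A : Set X) (j : ℕ) : dmIter A j ⊆ A := by
  induction j with
  | zero => exact subset_rfl
  | succ j ih => exact Set.sdiff_subset.trans ih

lemma dmIter_succ_subset_closure {X : Type*} [TopologicalSpace X] (A : Set X) (j : ℕ) :
    dmIter A (j + 1) ⊆ closure (closure (dmIter A j) \ dmIter A j) :=
  fun _ hx => by_contra fun h => hx.2 ⟨hx.1, h⟩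

/-- Each iterate is relatively closed in `A`. -/
lemma mem_dmIter_of_mem_closure {X : Type*} [TopologicalSpace X] {A : Set X} {j : ℕ} {y : X}
    (hy : y ∈ closure (dmIter A j)) (hA : y ∈ A) : y ∈ dmIter A j := by
  induction j with
  | zero => exact hA
  | succ j ih =>
    exact ⟨ih (closure_mono Set.sdiff_subset hy), fun h =>
      h.2 (closure_minimal (dmIter_succ_subset_closure A j) isClosed_closure hy)⟩

/-- Every point of `A^(j+1)` has a companion in `A^(j)` lying in strictly more of the open
sets `U i`. -/
lemma ssubset_of_mem_dmIter_succ {X ι : Type*} [TopologicalSpace X] [Finite ι] {A : Set X}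
    {U Z : ι → Set X} (hU : ∀ i, IsOpen (U i)) (hZ : ∀ i, IsClosed (Z i))
    (hA : A = ⋃ i, U i ∩ Z i) {j : ℕ} {x : X} (hx : x ∈ dmIter A (j + 1)) :
    ∃ z ∈ dmIter A j, {i | x ∈ U i} ⊂ {i | z ∈ U i} := by
  have hV : IsOpen (⋂ i ∈ {i | x ∈ U i}, U i) :=
    (Set.toFinite _).isOpen_biInter fun i _ => hU i
  obtain ⟨y, hyV, hyc, hyn⟩ := mem_closure_iff.1 (dmIter_succ_subset_closure A j hx) _ hV
    (Set.mem_iInter₂.2 fun i hi => hi)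
  have hyA : y ∉ A := fun h => hyn (mem_dmIter_of_mem_closure hyc h)
  have hW : IsOpen (⋂ i ∈ {i | y ∉ Z i}, (Z i)ᶜ) :=
    (Set.toFinite _).isOpen_biInter fun i _ => (hZ i).isOpen_compl
  obtain ⟨z, ⟨hzV, hzW⟩, hz⟩ := mem_closure_iff.1 hyc _ (hV.inter hW)
    ⟨hyV, Set.mem_iInter₂.2 fun i hi => hi⟩
  rw [Set.mem_iInter₂] at hyV hzV hzW
  have hzA : z ∈ ⋃ i, U i ∩ Z i := hA ▸ dmIter_subset A j hz
  obtain ⟨i, hzU, hzZ⟩ := Set.mem_iUnion.1 hzA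
  -- The index `i` is new: `y ∈ Z i` by the choice of `z`, so `y ∉ A` forces `y ∉ U i`.
  have hyZ : y ∈ Z i := by_contra fun h => hzW i h hzZ
  refine ⟨z, hz, fun i hi => hzV i hi, fun h => hyA ?_⟩
  rw [hA]
  exact Set.mem_iUnion.2 ⟨i, hyV i (h hzU), hyZ⟩

lemma ncard_add_le_of_mem_dmIter {X : Type*} [TopologicalSpace X] {A : Set X} {k : ℕ}
    {U Z : Fin k → Set X} (hU : ∀ i, IsOpen (U i)) (hZ : ∀ i, IsClosed (Z i))
    (hA : A = ⋃ i, U i ∩ Z i) {j : ℕ} {x : X} (hx : x ∈ dmIter A j) :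
    {i | x ∈ U i}.ncard + j ≤ k := by
  induction j generalizing x with
  | zero => simpa using Set.ncard_le_card {i | x ∈ U i}
  | succ j ih =>
    obtain ⟨z, hz, hlt⟩ := ssubset_of_mem_dmIter_succ hU hZ hA hx
    have h1 := Set.ncard_lt_ncard hlt (Set.toFinite _)
    have h2 := ih hz
    omega

lemma subset_iUnion_lcPart_union {X : Type*} [TopologicalSpace X] (A : Set X) (k : ℕ) :
    A ⊆ (⋃ i : Fin k, lcPart (dmIter A i)) ∪ dmIter A k := by
  intro x hx
  induction k with
  | zero => exact Or.inr hx
  | succ k ih =>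
    rcases ih with h | h
    · obtain ⟨i, hi⟩ := Set.mem_iUnion.1 h
      exact Or.inl (Set.mem_iUnion.2 ⟨i.castSucc, hi⟩)
    · by_cases hl : x ∈ lcPart (dmIter A k)
      · exact Or.inl (Set.mem_iUnion.2 ⟨Fin.last k, hl⟩)
      · exact Or.inr ⟨h, hl⟩

/-- (Dougherty–Miller) A subset `A` of a topological space is a union of `k ≥ 1` locally
closed sets iff `A^(k) = ∅`. -/
theorem union_of_locallyClosed_iff_dmIter_eq_empty
    {X : Type*} [TopologicalSpace X] (A : Set X) (k : ℕ) (hk : 1 ≤ k) :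
    (∃ f : Fin k → Set X, (∀ i, IsLocallyClosed (f i)) ∧ A = ⋃ i, f i) ↔
    dmIter A k = ∅ := by
  constructor
  · rintro ⟨f, hf, hA⟩
    choose U Z hU hZ hUZ using hf
    simp_rw [hUZ] at hA
    refine Set.eq_empty_iff_forall_notMem.2 fun x hx => ?_
    have hcard := ncard_add_le_of_mem_dmIter hU hZ hA hx
    have hxA : x ∈ ⋃ i, U i ∩ Z i := hA ▸ dmIter_subset A k hx
    obtain ⟨i, hi, -⟩ := Set.mem_iUnion.1 hxA
    have hpos : 0 < {i | x ∈ U i}.ncard := (Set.ncard_pos (Set.toFinite _)).2 ⟨i, hi⟩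
    omega
  · intro h
    refine ⟨fun i => lcPart (dmIter A i), fun i => isLocallyClosed_lcPart _,
      Set.Subset.antisymm ?_ (Set.iUnion_subset fun i =>
        Set.sdiff_subset.trans (dmIter_subset A i))⟩
    simpa [h] using subset_iUnion_lcPart_union A k
end

section
/- Let X be a topological space and A ⊆ X. Then A belongs to the Boolean algebra of subsets of X generated by the open sets (i.e. the smallest collection of subsets containing all open sets and closed under complements and finite unions) if and only if A^(k) = ∅ for some k ≥ 1, where A^(0) := A and A^(j+1) := A^(j) \ lc(A^(j)), with lc(S) := S \ closure(closure(S) \ S) the locally closed part of S. -/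
/-- The Boolean algebra of subsets of a topological space generated by the open sets: the
smallest collection of subsets containing all open sets and closed under complements and
finite (binary) unions. -/
def boolAlgOfOpens (X : Type*) [TopologicalSpace X] : Set (Set X) :=
  {S : Set X | ∀ C : Set (Set X),
    (∀ U : Set X, IsOpen U → U ∈ C) →
    (∀ T ∈ C, Tᶜ ∈ C) →
    (∀ T T' : Set X, T ∈ C → T' ∈ C → T ∪ T' ∈ C) →
    S ∈ C}

section

variable {X : Type*} [TopologicalSpace X]

lemma boolAlgOfOpens_of_isOpen {U : Set X} (hU : IsOpen U) : U ∈ boolAlgOfOpens X :=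
  fun _ h _ _ => h U hU

lemma boolAlgOfOpens_compl {S : Set X} (hS : S ∈ boolAlgOfOpens X) : Sᶜ ∈ boolAlgOfOpens X :=
  fun C h₁ h₂ h₃ => h₂ _ (hS C h₁ h₂ h₃)

lemma boolAlgOfOpens_union {S T : Set X} (hS : S ∈ boolAlgOfOpens X)
    (hT : T ∈ boolAlgOfOpens X) : S ∪ T ∈ boolAlgOfOpens X :=
  fun C h₁ h₂ h₃ => h₃ _ _ (hS C h₁ h₂ h₃) (hT C h₁ h₂ h₃)

lemma lcPart_mem_boolAlgOfOpens (S : Set X) : lcPart S ∈ boolAlgOfOpens X := by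
  have h : lcPart S = ((closure S)ᶜ ∪ (closure (closure S \ S))ᶜᶜ)ᶜ := by
    ext x
    simp only [lcPart, Set.mem_sdiff, Set.mem_compl_iff, Set.mem_union, not_or, not_not]
    refine ⟨fun hx => ⟨subset_closure hx.1, hx.2⟩, fun hx => ⟨?_, hx.2⟩⟩
    by_contra hxS
    exact hx.2 (subset_closure ⟨hx.1, hxS⟩)
  rw [h]
  exact boolAlgOfOpens_compl (boolAlgOfOpens_union
    (boolAlgOfOpens_of_isOpen isClosed_closure.isOpen_compl)
    (boolAlgOfOpens_compl (boolAlgOfOpens_of_isOpen isClosed_closure.isOpen_compl)))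

/-- Membership in `boolAlgOfOpens X` passes from `A^(k)` back to `A`, since the
removed pieces `lc(A^(j))` are themselves members. -/
lemma mem_boolAlgOfOpens_of_dmIter (A : Set X) (k : ℕ) (h : dmIter A k ∈ boolAlgOfOpens X) :
    A ∈ boolAlgOfOpens X := by
  induction k with
  | zero => exact h
  | succ k ih =>
    apply ih
    have h' := boolAlgOfOpens_union h (lcPart_mem_boolAlgOfOpens (dmIter A k))
    have hsub : lcPart (dmIter A k) ⊆ dmIter A k := Set.sdiff_subset
    rwa [dmIter, Set.sdiff_union_of_subset hsub] at h'

lemma dmIter_succ_eq (A : Set X) (k : ℕ) :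
    dmIter A (k + 1) = dmIter A k ∩ closure (closure (dmIter A k) \ dmIter A k) := by
  rw [dmIter, lcPart, Set.sdiff_sdiff_right_self]

lemma exists_isClosed_dmIter_eq_inter (A : Set X) (k : ℕ) :
    ∃ C : Set X, IsClosed C ∧ dmIter A k = A ∩ C := by
  induction k with
  | zero => exact ⟨Set.univ, isClosed_univ, (Set.inter_univ A).symm⟩
  | succ k ih =>
    obtain ⟨C, hC, h⟩ := ih
    refine ⟨C ∩ closure (closure (dmIter A k) \ dmIter A k), hC.inter isClosed_closure, ?_⟩
    rw [dmIter_succ_eq, ← Set.inter_assoc, ← h]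

lemma notMem_of_mem_closure_diff {A : Set X} {k : ℕ} {y : X}
    (hy : y ∈ closure (dmIter A k) \ dmIter A k) : y ∉ A := by
  obtain ⟨C, hC, h⟩ := exists_isClosed_dmIter_eq_inter A k
  intro hA
  have hyC : y ∈ C := closure_minimal (h ▸ Set.inter_subset_right) hC hy.1
  exact hy.2 (h ▸ ⟨hA, hyC⟩)

open Classical in
lemma exists_finset_of_mem_boolAlgOfOpens {A : Set X} (hA : A ∈ boolAlgOfOpens X) :
    ∃ 𝒰 : Finset (Set X), (∀ U ∈ 𝒰, IsOpen U) ∧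
      ∀ x y, (∀ U ∈ 𝒰, (x ∈ U ↔ y ∈ U)) → (x ∈ A ↔ y ∈ A) := by
  refine hA {A | ∃ 𝒰 : Finset (Set X), (∀ U ∈ 𝒰, IsOpen U) ∧
      ∀ x y, (∀ U ∈ 𝒰, (x ∈ U ↔ y ∈ U)) → (x ∈ A ↔ y ∈ A)} ?_ ?_ ?_
  · intro U hU
    exact ⟨{U}, by simpa using hU, fun x y h => h U (Finset.mem_singleton_self U)⟩
  · rintro T ⟨𝒰, h₁, h₂⟩
    exact ⟨𝒰, h₁, fun x y h => not_congr (h₂ x y h)⟩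
  · rintro T T' ⟨𝒰, h₁, h₂⟩ ⟨𝒰', h₁', h₂'⟩
    refine ⟨𝒰 ∪ 𝒰', fun U hU => (Finset.mem_union.1 hU).elim (h₁ U) (h₁' U), fun x y h => ?_⟩
    exact or_congr (h₂ x y fun U hU => h U (Finset.mem_union_left _ hU))
      (h₂' x y fun U hU => h U (Finset.mem_union_right _ hU))

/-- A limit of points of `S` is approximated by a point of `S` lying in every member of a finite
open family that contains the limit. -/
lemma exists_mem_forall_of_mem_closure {𝒰 : Finset (Set X)} (h𝒰 : ∀ U ∈ 𝒰, IsOpen U)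
    {S : Set X} {x : X} (hx : x ∈ closure S) : ∃ y ∈ S, ∀ U ∈ 𝒰, x ∈ U → y ∈ U := by
  have hn : ∀ᶠ y in nhds x, ∀ U ∈ 𝒰, x ∈ U → y ∈ U := by
    rw [Filter.eventually_all_finset]
    intro U hU
    by_cases hxU : x ∈ U
    · filter_upwards [(h𝒰 U hU).mem_nhds hxU] with y hy _ using hy
    · exact Filter.Eventually.of_forall fun y h => absurd h hxU
  obtain ⟨y, h, hy⟩ := mem_closure_iff_nhds.1 hx _ hn
  exact ⟨y, hy, h⟩

open Classical in
lemma filter_subset_filter_of_forall {Y : Type*} {𝒰 : Finset (Set Y)} {x y : Y}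
    (h : ∀ U ∈ 𝒰, x ∈ U → y ∈ U) : 𝒰.filter (x ∈ ·) ⊆ 𝒰.filter (y ∈ ·) := by
  intro U hU
  rw [Finset.mem_filter] at hU ⊢
  exact ⟨hU.1, h U hU.1 hU.2⟩

open Classical in
lemma card_filter_add_le {A : Set X} {𝒰 : Finset (Set X)} (h𝒰 : ∀ U ∈ 𝒰, IsOpen U)
    (hA : ∀ x y, (∀ U ∈ 𝒰, (x ∈ U ↔ y ∈ U)) → (x ∈ A ↔ y ∈ A)) (k : ℕ) :
    ∀ x ∈ dmIter A k, (𝒰.filter (x ∈ ·)).card + k ≤ 𝒰.card := by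
  induction k with
  | zero => exact fun x _ => Finset.card_filter_le _ _
  | succ k ih =>
    intro x hx
    rw [dmIter_succ_eq] at hx
    obtain ⟨y, hy, hxy⟩ := exists_mem_forall_of_mem_closure h𝒰 hx.2
    obtain ⟨z, hz, hyz⟩ := exists_mem_forall_of_mem_closure h𝒰 hy.1
    have hxA : x ∈ A := by
      obtain ⟨C, -, h⟩ := exists_isClosed_dmIter_eq_inter A k
      exact (h ▸ hx.1 : x ∈ A ∩ C).1
    have hyA : y ∉ A := notMem_of_mem_closure_diff hy
    have hlt : (𝒰.filter (x ∈ ·)).card < (𝒰.filter (y ∈ ·)).card := by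
      refine Finset.card_lt_card ⟨filter_subset_filter_of_forall hxy, fun hsub => ?_⟩
      refine hyA ((hA x y fun U hU => ⟨hxy U hU, fun hyU => ?_⟩).1 hxA)
      exact (Finset.mem_filter.1 (hsub (Finset.mem_filter.2 ⟨hU, hyU⟩))).2
    have hle : (𝒰.filter (y ∈ ·)).card ≤ (𝒰.filter (z ∈ ·)).card :=
      Finset.card_le_card (filter_subset_filter_of_forall hyz)
    have := ih z hz
    omega

end

/-- (Dougherty–Miller) A subset `A` of a topological space is a Boolean combination of open
sets iff `A^(k) = ∅` for some `k ≥ 1`. -/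
theorem mem_boolAlgOfOpens_iff_dmIter_eq_empty
    {X : Type*} [TopologicalSpace X] (A : Set X) :
    A ∈ boolAlgOfOpens X ↔ ∃ k : ℕ, 1 ≤ k ∧ dmIter A k = ∅ := by
  constructor
  · intro h
    obtain ⟨𝒰, h𝒰, hA⟩ := exists_finset_of_mem_boolAlgOfOpens h
    refine ⟨𝒰.card + 1, by omega, Set.eq_empty_of_forall_notMem fun x hx => ?_⟩
    have := card_filter_add_le h𝒰 hA _ x hx
    omega
  · rintro ⟨k, -, hk⟩
    exact mem_boolAlgOfOpens_of_dmIter A k (hk ▸ boolAlgOfOpens_of_isOpen isOpen_empty)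
end

section
/- Let X be a topological space and A ⊆ X. For every k ≥ 0, A^(k) = fr^(2k)(A), where fr(S) := closure(S) \ S, fr^(0)(S) := S, fr^(j+1)(S) := fr(fr^(j)(S)), and A^(0) := A, A^(j+1) := A^(j) \ lc(A^(j)) with lc(S) := S \ closure(fr(S)) the locally closed part of S. -/
/-! Both sequences evolve by the same rule `S ↦ S ∩ closure (fr S)`. For the left-hand side this is
immediate from the definition of `lc`. For two frontier steps, `fr (fr S) = closure (fr S) \ fr S`;
as `closure (fr S) ⊆ closure S`, removing `closure S \ S` leaves exactly the points of `S`. -/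

/-- The frontier operation `fr(S) := closure S \ S` and its iterates. -/
def frIter {X : Type*} [TopologicalSpace X] (S : Set X) : ℕ → Set X
  | 0 => S
  | j + 1 => closure (frIter S j) \ frIter S j

/-- One derivation step `S \ lc S` equals two frontier steps. -/
theorem diff_lcPart_eq {X : Type*} [TopologicalSpace X] (S : Set X) :
    S \ lcPart S = closure (closure S \ S) \ (closure S \ S) := by
  have h : closure (closure S \ S) ⊆ closure S :=
    closure_minimal Set.sdiff_subset isClosed_closure
  ext x
  have hx := @h x
  simp only [lcPart, Set.mem_sdiff]
  tauto

/-- For every `k ≥ 0`, `A^(k) = fr^(2k)(A)`. -/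
theorem dmIter_eq_frIter_two_mul
    {X : Type*} [TopologicalSpace X] (A : Set X) (k : ℕ) :
    dmIter A k = frIter A (2 * k) := by
  induction k with
  | zero => rfl
  | succ k ih =>
    change dmIter A k \ lcPart (dmIter A k) = _
    rw [diff_lcPart_eq, ih]
    rfl
end

section
/- Let p be a prime, n ≥ 1, and let μ be an additive Haar measure on ℚ_p normalized so that μ(ℤ_p) = 1. Then the set S_n := {x ∈ ℚ_p : x ≠ 0, v_p(x) ≥ −1, v_p(x) ≡ −1 (mod n), and x·p^{−v_p(x)} ∈ 1 + pℤ_p} satisfies μ(S_n) = (1 − p^{−n})^{−1}; in particular the local Euler factor (1 − p^{−n})^{−1} of the Riemann zeta function at n is the Haar measure of this set. -/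
/-!
For `m : ℤ`, the elements of `ℚ_p` of valuation exactly `m` and angular component `1` form the
closed ball of centre `p ^ m` and radius `p ^ (-(m + 1))` (`mem_closedBall_zpow_iff`). Writing the
admissible valuations as `m = n * k - 1` with `k : ℕ`, the set is therefore the disjoint union of
translates of the balls `p ^ (n * k) ℤ_p`. Such a ball has measure `p ^ (-(n * k))`, because
`p ^ m ℤ_p` splits into `p` translates of `p ^ (m + 1) ℤ_p` (`closedBall_eq_iUnion`), and summing
the geometric series over `k` gives the Euler factor.
-/

open MeasureTheory

/-- The elements of valuation `m` and angular component `1` form a closed ball around `p ^ m`. -/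
lemma mem_closedBall_zpow_iff (p : ℕ) [Fact p.Prime] (m : ℤ) (x : ℚ_[p]) :
    x ∈ Metric.closedBall ((p : ℚ_[p]) ^ m) ((p : ℝ) ^ (-(m + 1))) ↔
      x ≠ 0 ∧ x.valuation = m ∧
        ∃ y : ℤ_[p], x * (p : ℚ_[p]) ^ (-x.valuation) = 1 + (p : ℚ_[p]) * (y : ℚ_[p]) := by
  have hp1 : (1 : ℝ) < p := mod_cast (Fact.out : p.Prime).one_lt
  have hp0 : (0 : ℝ) < p := by linarith
  have hpQ : (p : ℚ_[p]) ≠ 0 := mod_cast (Fact.out : p.Prime).ne_zero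
  rw [Metric.mem_closedBall, dist_eq_norm]
  constructor
  · intro h
    have hlt : ‖x - (p : ℚ_[p]) ^ m‖ < ‖(p : ℚ_[p]) ^ m‖ := by
      rw [Padic.norm_p_zpow]
      exact h.trans_lt (zpow_lt_zpow_right₀ hp1 (by omega))
    have hn : ‖x‖ = (p : ℝ) ^ (-m) := by
      have := IsUltrametricDist.norm_add_eq_max_of_norm_ne_norm hlt.ne
      rw [sub_add_cancel, max_eq_right hlt.le, Padic.norm_p_zpow] at this
      exact this
    have hx : x ≠ 0 := by
      rintro rfl
      rw [norm_zero] at hn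
      exact (zpow_pos hp0 _).ne hn
    have hv : x.valuation = m := by
      rw [Padic.norm_eq_zpow_neg_valuation hx] at hn
      have := (zpow_right_injective₀ hp0 hp1.ne') hn
      omega
    refine ⟨hx, hv, ⟨(x - (p : ℚ_[p]) ^ m) * (p : ℚ_[p]) ^ (-(m + 1)), ?_⟩, ?_⟩
    · rw [norm_mul, Padic.norm_p_zpow]
      calc _ ≤ (p : ℝ) ^ (-(m + 1)) * (p : ℝ) ^ (-(-(m + 1))) := by gcongr
        _ = 1 := by rw [← zpow_add₀ hp0.ne']; simp
    · rw [hv]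
      simp only [zpow_neg, zpow_add₀ hpQ, zpow_one]
      field_simp
      ring
  · rintro ⟨hx, hv, y, hy⟩
    rw [hv] at hy
    have : x - (p : ℚ_[p]) ^ m = (p : ℚ_[p]) ^ (m + 1) * y := by
      have h2 : x = (p : ℚ_[p]) ^ m * (1 + p * y) := by
        rw [← hy, zpow_neg]
        field_simp
      rw [h2, zpow_add₀ hpQ, zpow_one]
      ring
    rw [this, norm_mul, Padic.norm_p_zpow]
    exact mul_le_of_le_one_right (zpow_pos hp0 _).le y.2

/-- The coset decomposition of `p ^ m ℤ_p` modulo `p ^ (m + 1) ℤ_p`, in terms of balls. -/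
lemma closedBall_eq_iUnion (p : ℕ) [Fact p.Prime] (m : ℕ) :
    Metric.closedBall (0 : ℚ_[p]) ((p : ℝ) ^ (-(m : ℤ))) =
      ⋃ i : Fin p, Metric.closedBall ((i : ℕ) * (p : ℚ_[p]) ^ m) ((p : ℝ) ^ (-((m : ℤ) + 1))) := by
  have hp1 : (1 : ℝ) < p := mod_cast (Fact.out : p.Prime).one_lt
  have hp0 : (0 : ℝ) < p := by linarith
  have hpQ : (p : ℚ_[p]) ≠ 0 := mod_cast (Fact.out : p.Prime).ne_zero
  ext x
  simp only [Set.mem_iUnion, Metric.mem_closedBall, dist_eq_norm, sub_zero]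
  constructor
  · intro h
    have hz : ‖x * (p : ℚ_[p]) ^ (-(m : ℤ))‖ ≤ 1 := by
      rw [norm_mul, Padic.norm_p_zpow]
      calc _ ≤ (p : ℝ) ^ (-(m : ℤ)) * (p : ℝ) ^ (-(-(m : ℤ))) := by gcongr
        _ = 1 := by rw [← zpow_add₀ hp0.ne']; simp
    obtain ⟨z, hzx⟩ : ∃ z : ℤ_[p], (z : ℚ_[p]) = x * (p : ℚ_[p]) ^ (-(m : ℤ)) := ⟨⟨_, hz⟩, rfl⟩
    obtain ⟨i, hi, hmem⟩ := PadicInt.exists_mem_range z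
    refine ⟨⟨i, hi⟩, ?_⟩
    rw [PadicInt.maximalIdeal_eq_span_p, Ideal.mem_span_singleton] at hmem
    obtain ⟨c, hc⟩ := hmem
    have hc' := congrArg (fun z : ℤ_[p] => (z : ℚ_[p])) hc
    simp only [PadicInt.coe_sub, PadicInt.coe_mul, PadicInt.coe_natCast, hzx] at hc'
    have : x - i * (p : ℚ_[p]) ^ m = (p : ℚ_[p]) ^ ((m : ℤ) + 1) * c := by
      rw [zpow_add₀ hpQ, zpow_one, mul_assoc, ← hc', zpow_neg, zpow_natCast]
      field_simp
    change ‖x - i * (p : ℚ_[p]) ^ m‖ ≤ _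
    rw [this, norm_mul, Padic.norm_p_zpow]
    exact mul_le_of_le_one_right (zpow_pos hp0 _).le c.2
  · rintro ⟨i, hi⟩
    have h1 : ‖((i : ℕ) : ℚ_[p]) * (p : ℚ_[p]) ^ m‖ ≤ (p : ℝ) ^ (-(m : ℤ)) := by
      rw [norm_mul, Padic.norm_p_pow]
      refine mul_le_of_le_one_left (zpow_pos hp0 _).le ?_
      exact_mod_cast Padic.norm_int_le_one (p := p) (i : ℕ)
    have h2 := hi.trans (zpow_le_zpow_right₀ hp1.le (by omega : -((m : ℤ) + 1) ≤ -(m : ℤ)))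
    have := IsUltrametricDist.norm_add_le_max (x - ((i : ℕ) : ℚ_[p]) * (p : ℚ_[p]) ^ m)
      (((i : ℕ) : ℚ_[p]) * (p : ℚ_[p]) ^ m)
    rw [sub_add_cancel] at this
    exact this.trans (max_le h2 h1)

lemma pairwise_disjoint_closedBall (p : ℕ) [Fact p.Prime] (m : ℕ) :
    Pairwise (Function.onFun Disjoint fun i : Fin p =>
      Metric.closedBall (((i : ℕ) : ℚ_[p]) * (p : ℚ_[p]) ^ m) ((p : ℝ) ^ (-((m : ℤ) + 1)))) := by
  have hp1 : (1 : ℝ) < p := mod_cast (Fact.out : p.Prime).one_lt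
  have hp0 : (0 : ℝ) < p := by linarith
  intro i j hij
  rw [Function.onFun, Set.disjoint_left]
  intro x hi hj
  rw [Metric.mem_closedBall] at hi hj
  have h := (dist_triangle_max (((i : ℕ) : ℚ_[p]) * (p : ℚ_[p]) ^ m) x
    (((j : ℕ) : ℚ_[p]) * (p : ℚ_[p]) ^ m)).trans (max_le (dist_comm x _ ▸ hi) hj)
  rw [dist_eq_norm, ← sub_mul, norm_mul, Padic.norm_p_pow, neg_add, zpow_add₀ hp0.ne',
    mul_comm, mul_le_mul_iff_right₀ (zpow_pos hp0 _)] at h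
  have hdvd : ‖(((i : ℕ) - (j : ℕ) : ℤ) : ℚ_[p])‖ ≤ (p : ℝ) ^ (-(1 : ℕ) : ℤ) := by
    push_cast
    exact_mod_cast h
  rw [Padic.norm_int_le_pow_iff_dvd, pow_one] at hdvd
  -- distinct representatives in `[0, p)` cannot be congruent modulo `p`
  have h0 := Int.eq_zero_of_abs_lt_dvd hdvd (by rw [abs_lt]; omega)
  exact hij (Fin.ext (by omega))

lemma measure_closedBall_zero (p : ℕ) [Fact p.Prime]
    [MeasurableSpace ℚ_[p]] [BorelSpace ℚ_[p]]
    (μ : Measure ℚ_[p]) [μ.IsAddHaarMeasure]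
    (hμ : μ (Set.range ((↑) : ℤ_[p] → ℚ_[p])) = 1) (m : ℕ) :
    μ (Metric.closedBall (0 : ℚ_[p]) ((p : ℝ) ^ (-(m : ℤ)))) = ((p : ENNReal) ^ m)⁻¹ := by
  have hpE : (p : ENNReal) ≠ 0 := mod_cast (Fact.out : p.Prime).ne_zero
  induction m with
  | zero =>
    have : Metric.closedBall (0 : ℚ_[p]) ((p : ℝ) ^ (-((0 : ℕ) : ℤ))) =
        Set.range ((↑) : ℤ_[p] → ℚ_[p]) := by
      ext x
      simp only [Nat.cast_zero, neg_zero, zpow_zero, mem_closedBall_zero_iff, Set.mem_range]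
      exact ⟨fun h => ⟨⟨x, h⟩, rfl⟩, by rintro ⟨y, rfl⟩; exact y.2⟩
    rw [this, hμ]
    simp
  | succ m ih =>
    rw [closedBall_eq_iUnion, measure_iUnion (pairwise_disjoint_closedBall p m)
      (fun _ => Metric.isClosed_closedBall.measurableSet)] at ih
    simp only [Measure.addHaar_closedBall_center] at ih
    rw [tsum_fintype, Finset.sum_const, Finset.card_univ, Fintype.card_fin, nsmul_eq_mul] at ih
    push_cast
    rw [pow_succ, ENNReal.mul_inv (by simp) (by simp), ← ih, mul_comm, ← mul_assoc,
      ENNReal.inv_mul_cancel hpE (by simp), one_mul]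

/-- Let `μ` be an additive Haar measure on `ℚ_p` normalized so that `μ(ℤ_p) = 1`, and let
`n ≥ 1`. The set `S_n` of nonzero `x ∈ ℚ_p` with `v_p(x) ≥ -1`, `v_p(x) ≡ -1 (mod n)`, and
angular component `1` (i.e. `x·p^{-v_p(x)} ∈ 1 + pℤ_p`) has measure `(1 - p^{-n})⁻¹`, the
local Euler factor of the Riemann zeta function at `n`. -/
theorem padic_haar_measure_euler_factor
    (p : ℕ) [Fact p.Prime] (n : ℕ) (hn : 1 ≤ n)
    [MeasurableSpace ℚ_[p]] [BorelSpace ℚ_[p]]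
    (μ : Measure ℚ_[p]) [μ.IsAddHaarMeasure]
    (hμ : μ (Set.range ((↑) : ℤ_[p] → ℚ_[p])) = 1) :
    μ {x : ℚ_[p] | x ≠ 0 ∧ (-1 : ℤ) ≤ x.valuation ∧ x.valuation ≡ -1 [ZMOD (n : ℤ)] ∧
        ∃ y : ℤ_[p], x * (p : ℚ_[p]) ^ (-x.valuation) = 1 + (p : ℚ_[p]) * (y : ℚ_[p])} =
      (1 - ((p : ENNReal) ^ n)⁻¹)⁻¹ := by
  have hset : {x : ℚ_[p] | x ≠ 0 ∧ (-1 : ℤ) ≤ x.valuation ∧ x.valuation ≡ -1 [ZMOD (n : ℤ)] ∧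
        ∃ y : ℤ_[p], x * (p : ℚ_[p]) ^ (-x.valuation) = 1 + (p : ℚ_[p]) * (y : ℚ_[p])} =
      ⋃ k : ℕ, Metric.closedBall ((p : ℚ_[p]) ^ ((n : ℤ) * k - 1))
        ((p : ℝ) ^ (-(((n : ℤ) * k - 1) + 1))) := by
    ext x
    simp only [Set.mem_iUnion, mem_closedBall_zpow_iff, Set.mem_ofPred_eq]
    constructor
    · rintro ⟨hx, hv, hmod, hy⟩
      obtain ⟨c, hc⟩ := hmod.symm.dvd
      have hc0 : 0 ≤ c := by
        by_contra! hneg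
        nlinarith [(by exact_mod_cast hn : (1 : ℤ) ≤ n)]
      lift c to ℕ using hc0
      exact ⟨c, hx, by omega, hy⟩
    · rintro ⟨k, hx, hv, hy⟩
      refine ⟨hx, ?_, ?_, hy⟩
      · have : (0 : ℤ) ≤ (n : ℤ) * k := by positivity
        omega
      · rw [hv]
        exact (Int.modEq_iff_dvd.2 ⟨k, by ring⟩).symm
  rw [hset, measure_iUnion _ (fun _ => Metric.isClosed_closedBall.measurableSet)]
  · rw [← ENNReal.tsum_geometric]
    refine tsum_congr fun k => ?_
    have he : -(((n : ℤ) * k - 1) + 1) = -((n * k : ℕ) : ℤ) := by push_cast; ring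
    rw [he, Measure.addHaar_closedBall_center, measure_closedBall_zero p μ hμ, pow_mul,
      ENNReal.inv_pow]
  -- the balls are disjoint because the valuation recovers `k`
  · intro k l hkl
    rw [Function.onFun, Set.disjoint_left]
    intro x hk hl
    rw [mem_closedBall_zpow_iff] at hk hl
    have h : (n : ℤ) * k = n * l := by linarith [hk.2.1, hl.2.1]
    have h' : n * k = n * l := by exact_mod_cast h
    exact hkl (Nat.eq_of_mul_eq_mul_left hn h')
end
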